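/- Let ρ and σ be density matrices on the tensor product ℂ^{d_A} ⊗ ℂ^{d_B} and let p ∈ (0,1). Then H(A|B)_{pρ+(1−p)σ} ≤ p·H(A|B)_ρ + (1−p)·H(A|B)_σ + h₂(p), where h₂(p) = −p·ln p − (1−p)·ln(1−p). -/

import Mathlib

open Matrix

/-- The von Neumann entropy `H(ρ) = Σ_i η(λ_i)` of a matrix, where `λ_i` are
its eigenvalues and `η(x) = −x·ln x` (and `0` if the matrix is not
Hermitian). -/
noncomputable def vnEntropy {n : Type*} [Fintype n] [DecidableEq n]
    (ρ : Matrix n n ℂ) : ℝ :=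
  if h : ρ.IsHermitian then ∑ i, Real.negMulLog (h.eigenvalues i) else 0

/-- Partial trace over the first factor:
`ρ_B(k,l) = Σ_i ρ((i,k),(i,l))`. -/
noncomputable def ptrA {dA dB : ℕ}
    (ρ : Matrix (Fin dA × Fin dB) (Fin dA × Fin dB) ℂ) :
    Matrix (Fin dB) (Fin dB) ℂ :=
  Matrix.of fun k l => ∑ i : Fin dA, ρ (i, k) (i, l)

/-- The quantum conditional entropy `H(A|B)_ρ = H(ρ) − H(ρ_B)`. -/
noncomputable def condEntropy {dA dB : ℕ}
    (ρ : Matrix (Fin dA × Fin dB) (Fin dA × Fin dB) ℂ) : ℝ :=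
  vnEntropy ρ - vnEntropy (ptrA ρ)

lemma vnEntropy_eq_roots {n : Type*} [Fintype n] [DecidableEq n] {A : Matrix n n ℂ}
    (h : A.IsHermitian) :
    vnEntropy A = (A.charpoly.roots.map (fun z => Real.negMulLog z.re)).sum := by
  rw [vnEntropy, dif_pos h, h.roots_charpoly_eq_eigenvalues, Multiset.map_map]
  simp [Function.comp_def]

lemma vnEntropy_mul_comm {m n : Type*} [Fintype n] [DecidableEq n] [Fintype m] [DecidableEq m]
    (A : Matrix m n ℂ) (B : Matrix n m ℂ) (h1 : (A * B).IsHermitian) (h2 : (B * A).IsHermitian) :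
    vnEntropy (A * B) = vnEntropy (B * A) := by
  rw [vnEntropy_eq_roots h1, vnEntropy_eq_roots h2]
  have h := Matrix.charpoly_mul_comm' A B
  have h' := congrArg (fun q : Polynomial ℂ =>
    (q.roots.map (fun z => Real.negMulLog z.re)).sum) h
  beta_reduce at h'
  rw [Polynomial.roots_mul (mul_ne_zero (by simp) (Matrix.charpoly_monic _).ne_zero),
    Polynomial.roots_mul (mul_ne_zero (by simp) (Matrix.charpoly_monic _).ne_zero)] at h'
  simpa [Multiset.map_nsmul, Multiset.sum_nsmul] using h'

open scoped ComplexOrder in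
lemma vnEntropy_le_diag {n : Type*} [Fintype n] [DecidableEq n] {G : Matrix n n ℂ}
    (hG : G.PosSemidef) : vnEntropy G ≤ ∑ k, Real.negMulLog (G k k).re := by
  have h := hG.isHermitian
  rw [vnEntropy, dif_pos h]
  set U : Matrix n n ℂ := (h.eigenvectorUnitary : Matrix n n ℂ) with hU
  have hUU : U * star U = 1 := Unitary.coe_mul_star_self h.eigenvectorUnitary
  have hUU' : star U * U = 1 := Unitary.coe_star_mul_self h.eigenvectorUnitary
  have hrow : ∀ k, ∑ i, Complex.normSq (U k i) = 1 := by
    intro k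
    have := congrFun (congrFun hUU k) k
    simp only [Matrix.mul_apply, Matrix.star_apply, Matrix.one_apply_eq, RCLike.star_def,
      Complex.mul_conj] at this
    exact_mod_cast this
  have hcol : ∀ i, ∑ k, Complex.normSq (U k i) = 1 := by
    intro k
    have := congrFun (congrFun hUU' k) k
    simp only [Matrix.mul_apply, Matrix.star_apply, Matrix.one_apply_eq, RCLike.star_def,
      mul_comm ((starRingEnd ℂ) _), Complex.mul_conj] at this
    exact_mod_cast this
  have hdiag : ∀ k, (G k k).re = ∑ i, Complex.normSq (U k i) * h.eigenvalues i := by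
    intro k
    have := congrFun (congrFun h.spectral_theorem k) k
    rw [Unitary.conjStarAlgAut_apply, ← hU, Matrix.mul_apply] at this
    simp only [Matrix.mul_diagonal, Matrix.star_apply, RCLike.star_def] at this
    rw [this, Complex.re_sum]
    refine Finset.sum_congr rfl fun i _ => ?_
    rw [mul_right_comm, Complex.mul_conj]
    simp
  calc ∑ i, Real.negMulLog (h.eigenvalues i)
      = ∑ k, ∑ i, Complex.normSq (U k i) * Real.negMulLog (h.eigenvalues i) := by
        rw [Finset.sum_comm]
        refine Finset.sum_congr rfl fun i _ => ?_
        rw [← Finset.sum_mul, hcol, one_mul]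
    _ ≤ _ := by
        refine Finset.sum_le_sum fun k _ => ?_
        rw [hdiag]
        have := Real.concaveOn_negMulLog.le_map_sum (t := Finset.univ)
          (w := fun i => Complex.normSq (U k i)) (p := h.eigenvalues)
          (fun i _ => Complex.normSq_nonneg _) (hrow k)
          (fun i _ => hG.eigenvalues_nonneg i)
        simpa [smul_eq_mul] using this

open scoped ComplexOrder in
lemma vnEntropy_concave {n : Type*} [Fintype n] [DecidableEq n] {ρ σ : Matrix n n ℂ}
    (hρ : ρ.PosSemidef) (hσ : σ.PosSemidef) (p : ℝ) (hp0 : 0 < p) (hp1 : p < 1) :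
    p * vnEntropy ρ + (1 - p) * vnEntropy σ ≤ vnEntropy (p • ρ + (1 - p) • σ) := by
  have hM : (p • ρ + (1 - p) • σ).PosSemidef :=
    (hρ.smul hp0.le).add (hσ.smul (sub_pos.2 hp1).le)
  have h := hM.isHermitian
  set M := p • ρ + (1 - p) • σ with hMdef
  set U : Matrix n n ℂ := (h.eigenvectorUnitary : Matrix n n ℂ) with hU
  have hUU : U * Uᴴ = 1 := Unitary.coe_mul_star_self h.eigenvectorUnitary
  have hUU' : Uᴴ * U = 1 := Unitary.coe_star_mul_self h.eigenvectorUnitary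
  have key : ∀ τ : Matrix n n ℂ, τ.PosSemidef →
      vnEntropy τ ≤ ∑ k, Real.negMulLog ((Uᴴ * τ * U) k k).re := by
    intro τ hτ
    have h1 := hτ.conjTranspose_mul_mul_same U
    have h2 : U * (Uᴴ * τ) = τ := by rw [← Matrix.mul_assoc, hUU, Matrix.one_mul]
    have := vnEntropy_mul_comm U (Uᴴ * τ) (by rw [h2]; exact hτ.isHermitian) h1.isHermitian
    rw [h2] at this
    rw [this]
    exact vnEntropy_le_diag h1
  have hev : ∀ k, h.eigenvalues k =
      p * ((Uᴴ * ρ * U) k k).re + (1 - p) * ((Uᴴ * σ * U) k k).re := by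
    intro k
    have h3 : Uᴴ * M * U = diagonal (RCLike.ofReal ∘ h.eigenvalues) := by
      conv_lhs => rw [h.spectral_theorem, Unitary.conjStarAlgAut_apply, ← hU]
      rw [star_eq_conjTranspose, Matrix.mul_assoc, Matrix.mul_assoc, hUU', Matrix.mul_one,
        ← Matrix.mul_assoc, hUU', Matrix.one_mul]
    have h4 := congrArg Complex.re (congrFun (congrFun h3 k) k)
    have h5 : Uᴴ * M * U = p • (Uᴴ * ρ * U) + (1 - p) • (Uᴴ * σ * U) := by
      simp only [hMdef, Matrix.mul_add, Matrix.add_mul, Matrix.mul_smul, Matrix.smul_mul]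
    rw [h5, diagonal_apply_eq] at h4
    simp only [Matrix.add_apply, Matrix.smul_apply, Complex.add_re, Complex.smul_re,
      smul_eq_mul] at h4
    rw [h4]
    simp
  have hV : vnEntropy M = ∑ k, Real.negMulLog (h.eigenvalues k) := by
    rw [vnEntropy, dif_pos h]
  have hnn : ∀ τ : Matrix n n ℂ, τ.PosSemidef → ∀ k, 0 ≤ ((Uᴴ * τ * U) k k).re := by
    intro τ hτ k
    exact (Complex.le_def.1 ((hτ.conjTranspose_mul_mul_same U).diag_nonneg (i := k))).1
  rw [hV]
  calc p * vnEntropy ρ + (1 - p) * vnEntropy σ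
      ≤ p * ∑ k, Real.negMulLog ((Uᴴ * ρ * U) k k).re +
        (1 - p) * ∑ k, Real.negMulLog ((Uᴴ * σ * U) k k).re :=
        add_le_add (mul_le_mul_of_nonneg_left (key ρ hρ) hp0.le)
          (mul_le_mul_of_nonneg_left (key σ hσ) (sub_pos.2 hp1).le)
    _ ≤ _ := by
        rw [Finset.mul_sum, Finset.mul_sum, ← Finset.sum_add_distrib]
        refine Finset.sum_le_sum fun k _ => ?_
        rw [hev]
        have := Real.concaveOn_negMulLog.2 (hnn ρ hρ k) (hnn σ hσ k) hp0.le
          (sub_pos.2 hp1).le (by ring)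
        simpa [smul_eq_mul] using this

open scoped ComplexOrder in
lemma exists_factor {n : Type*} [Fintype n] [DecidableEq n] {ρ : Matrix n n ℂ}
    (hρ : ρ.PosSemidef) (p : ℝ) (hp : 0 ≤ p) :
    ∃ A : Matrix n n ℂ, A * Aᴴ = p • ρ ∧
      ∀ k, ((Aᴴ * A) k k).re = p * hρ.isHermitian.eigenvalues k := by
  have h := hρ.isHermitian
  set U : Matrix n n ℂ := (h.eigenvectorUnitary : Matrix n n ℂ) with hU
  have hUU' : Uᴴ * U = 1 := Unitary.coe_star_mul_self h.eigenvectorUnitary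
  set D : Matrix n n ℂ := diagonal (fun k => ((√(p * h.eigenvalues k) : ℝ) : ℂ)) with hD
  have hDD : D * Dᴴ = diagonal (fun k => ((p * h.eigenvalues k : ℝ) : ℂ)) := by
    rw [hD, diagonal_conjTranspose, diagonal_mul_diagonal]
    congr 1
    funext k
    have h1 : √(p * h.eigenvalues k) * √(p * h.eigenvalues k) = p * h.eigenvalues k :=
      Real.mul_self_sqrt (mul_nonneg hp (hρ.eigenvalues_nonneg k))
    simp only [Pi.star_apply, RCLike.star_def, Complex.conj_ofReal]
    rw [← Complex.ofReal_mul, h1]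
  have hDD' : Dᴴ * D = D * Dᴴ := by
    rw [hD, diagonal_conjTranspose, diagonal_mul_diagonal, diagonal_mul_diagonal]
    congr 1
    funext k
    exact mul_comm _ _
  refine ⟨U * D, ?_, ?_⟩
  · have h2 : D * Dᴴ = p • (diagonal (RCLike.ofReal ∘ h.eigenvalues) : Matrix n n ℂ) := by
      rw [hDD]
      ext i j
      by_cases hij : i = j
      · subst hij; simp
      · simp [hij]
    conv_rhs => rw [h.spectral_theorem, Unitary.conjStarAlgAut_apply, ← hU]
    rw [conjTranspose_mul, Matrix.mul_assoc, ← Matrix.mul_assoc D, h2, star_eq_conjTranspose]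
    simp [Matrix.mul_assoc]
  · intro k
    rw [conjTranspose_mul, Matrix.mul_assoc, ← Matrix.mul_assoc Uᴴ, hUU', Matrix.one_mul, hDD',
      hDD, diagonal_apply_eq, Complex.ofReal_re]

open scoped ComplexOrder in
lemma sum_negMulLog_scaled {n : Type*} [Fintype n] [DecidableEq n] {ρ : Matrix n n ℂ}
    (hρ : ρ.PosSemidef) (htr : ρ.trace = 1) (p : ℝ) :
    ∑ k, Real.negMulLog (p * hρ.isHermitian.eigenvalues k) =
      p * vnEntropy ρ + Real.negMulLog p := by
  have h1 : ∑ k, hρ.isHermitian.eigenvalues k = 1 := by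
    have := hρ.isHermitian.trace_eq_sum_eigenvalues
    rw [htr] at this
    have h2 := congrArg Complex.re this
    simpa using h2.symm
  simp only [Real.negMulLog_mul]
  rw [Finset.sum_add_distrib, ← Finset.sum_mul, h1, ← Finset.mul_sum, vnEntropy,
    dif_pos hρ.isHermitian]
  ring

open scoped ComplexOrder in
lemma vnEntropy_mix_le {n : Type*} [Fintype n] [DecidableEq n] {ρ σ : Matrix n n ℂ}
    (hρ : ρ.PosSemidef) (hρ_tr : ρ.trace = 1) (hσ : σ.PosSemidef) (hσ_tr : σ.trace = 1)
    (p : ℝ) (hp0 : 0 < p) (hp1 : p < 1) :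
    vnEntropy (p • ρ + (1 - p) • σ) ≤ p * vnEntropy ρ + (1 - p) * vnEntropy σ +
      (Real.negMulLog p + Real.negMulLog (1 - p)) := by
  obtain ⟨A, hA, hA'⟩ := exists_factor hρ p hp0.le
  obtain ⟨B, hB, hB'⟩ := exists_factor hσ (1 - p) (sub_pos.2 hp1).le
  have hW : fromCols A B * (fromCols A B)ᴴ = p • ρ + (1 - p) • σ := by
    rw [conjTranspose_fromCols_eq_fromRows_conjTranspose, fromCols_mul_fromRows, hA, hB]
  have h1 := vnEntropy_le_diag (posSemidef_conjTranspose_mul_self (fromCols A B))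
  rw [← vnEntropy_mul_comm (fromCols A B) (fromCols A B)ᴴ
    (isHermitian_mul_conjTranspose_self _) (isHermitian_conjTranspose_mul_self _), hW,
    conjTranspose_fromCols_eq_fromRows_conjTranspose, fromRows_mul_fromCols,
    Fintype.sum_sum_type] at h1
  simp only [fromBlocks_apply₁₁, fromBlocks_apply₂₂, hA', hB'] at h1
  rw [sum_negMulLog_scaled hρ hρ_tr, sum_negMulLog_scaled hσ hσ_tr] at h1
  linarith

open scoped ComplexOrder in
lemma ptrA_posSemidef {dA dB : ℕ} {ρ : Matrix (Fin dA × Fin dB) (Fin dA × Fin dB) ℂ}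
    (hρ : ρ.PosSemidef) : (ptrA ρ).PosSemidef := by
  have : ptrA ρ = ∑ i : Fin dA, ρ.submatrix (fun k => (i, k)) (fun k => (i, k)) := by
    ext k l
    simp [ptrA, Matrix.sum_apply]
  rw [this]
  exact posSemidef_sum _ fun i _ => hρ.submatrix _

open scoped ComplexOrder in
/-- Near-concavity of the quantum conditional entropy:
`H(A|B)_{pρ+(1−p)σ} ≤ p·H(A|B)_ρ + (1−p)·H(A|B)_σ + h₂(p)`. -/
theorem condEntropy_convex_combination_le {dA dB : ℕ}
    (ρ σ : Matrix (Fin dA × Fin dB) (Fin dA × Fin dB) ℂ)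
    (hρ : ρ.PosSemidef) (hρ_tr : ρ.trace = 1)
    (hσ : σ.PosSemidef) (hσ_tr : σ.trace = 1)
    (p : ℝ) (hp0 : 0 < p) (hp1 : p < 1) :
    condEntropy (p • ρ + (1 - p) • σ) ≤
      p * condEntropy ρ + (1 - p) * condEntropy σ +
        (-(p * Real.log p) - (1 - p) * Real.log (1 - p)) := by
  have h1 := vnEntropy_mix_le hρ hρ_tr hσ hσ_tr p hp0 hp1
  have h2 := vnEntropy_concave (ptrA_posSemidef hρ) (ptrA_posSemidef hσ) p hp0 hp1
  have h3 : ptrA (p • ρ + (1 - p) • σ) = p • ptrA ρ + (1 - p) • ptrA σ := by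
    ext k l
    simp [ptrA, Finset.sum_add_distrib, Finset.mul_sum]
  simp only [condEntropy, h3]
  simp only [Real.negMulLog] at h1
  linarith
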